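/- Let A ∈ ℝ^{n×n} be a signed real matrix with zero diagonal, let L be its complex Laplacian (so L = D − A with d_i = Σ_j |a_{ij}|), let Δ = max_i d_i, and suppose 0 < κ < 1/Δ. If A is essentially nonnegative and the digraph G(A) has a directed spanning tree, then there exist σ ∈ {−1, +1}^n such that D_σ A D_σ is entrywise nonnegative and η ∈ ℝ^n with η^T L = 0 and ‖η‖₁ = 1 such that for every initial state x(0) ∈ ℝ^n, the iterates x(k) = (I − κL)^k x(0) satisfy lim_{k→∞} x(k) = (η^T x(0)) σ. -/

import Mathlib

open Matrix Filter

/-- The Laplacian `L = D - A` of a signed real matrix, with `d i = ∑ j, |A i j|`. -/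
noncomputable def lapR {n : ℕ} (A : Matrix (Fin n) (Fin n) ℝ) : Matrix (Fin n) (Fin n) ℝ :=
  Matrix.diagonal (fun i => ∑ j, |A i j|) - A

/-- `G(A)` has a directed spanning tree: some root `r` has a directed path
(an edge from `u` to `v` exists iff `A v u ≠ 0`) to every vertex. -/
def hasSpanningTreeR {n : ℕ} (A : Matrix (Fin n) (Fin n) ℝ) : Prop :=
  ∃ r : Fin n, ∀ j, Relation.ReflTransGen (fun u v => A v u ≠ 0) r j

/-- A signed real matrix is essentially nonnegative iff some signature
`σ ∈ {±1}^n` makes `D_σ A D_σ` entrywise nonnegative. -/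
def EssNonnegR {n : ℕ} (A : Matrix (Fin n) (Fin n) ℝ) : Prop :=
  ∃ σ : Fin n → ℝ, (∀ i, σ i = 1 ∨ σ i = -1) ∧
    ∀ i j, 0 ≤ (Matrix.diagonal σ * A * Matrix.diagonal σ) i j

/-!
Conjugating by `diagonal σ` replaces `A` by the entrywise nonnegative matrix `W = D_σ A D_σ` and
`L(A)` by `L(W)`, so it suffices to treat `B = 1 - κ L(W)`. This `B` is row-stochastic with positive
diagonal, and the root of the spanning tree makes a whole column of some power `B ^ N` at least
some `ε > 0`. Such a power averages every vector with weight `ε` on one common coordinate, so it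
shrinks the range of a vector by the factor `1 - ε`. Hence `B ^ k` tends to a matrix with all rows
equal to some probability vector `p`, and undoing the conjugation gives `P ^ k → σ ηᵀ` for
`P = 1 - κ L(A)` and `η = D_σ p`. Passing to the limit in `P ^ k * P = P ^ (k + 1)` yields
`ηᵀ L(A) = 0`.
-/

open scoped Topology

lemma conj_conj_of_mul_self_eq_one {M : Type*} [Monoid M] {d : M} (hd : d * d = 1) (x : M) :
    d * (d * x * d) * d = x := by
  rw [mul_assoc d x d, ← mul_assoc d d, hd, one_mul, mul_assoc, hd, mul_one]

lemma conj_pow_of_mul_self_eq_one {M : Type*} [Monoid M] {d : M} (hd : d * d = 1) (x : M) (k : ℕ) :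
    (d * x * d) ^ k = d * x ^ k * d :=
  Units.conj_pow ⟨d, d, hd, hd⟩ x k

lemma mul_eq_of_tendsto_pow {M : Type*} [Monoid M] [TopologicalSpace M] [ContinuousMul M]
    [T2Space M] {x y : M} (h : Tendsto (fun k : ℕ => x ^ k) atTop (𝓝 y)) : y * x = y := by
  refine tendsto_nhds_unique (h.mul_const x) ?_
  simpa only [← pow_succ] using (tendsto_add_atTop_iff_nat 1).2 h

lemma mul_lt_one_of_lt_inv_iSup {ι : Type*} {f : ι → ℝ} (hf : BddAbove (Set.range f)) {κ : ℝ}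
    (hκ0 : 0 ≤ κ) (hκ : κ < (⨆ i, f i)⁻¹) (i : ι) : κ * f i < 1 :=
  calc κ * f i ≤ κ * ⨆ i, f i := mul_le_mul_of_nonneg_left (le_ciSup hf i) hκ0
    _ < 1 := (lt_inv_mul_iff₀' (inv_pos.1 (hκ0.trans_lt hκ))).1 (by simpa using hκ)

lemma exists_tendsto_const_of_eventually_mem_Icc {α ι : Type*} [Nonempty ι] {l : Filter α} [l.NeBot]
    {u : α → ι → ℝ}
    (h : ∀ δ > 0, ∃ m M : ℝ, M - m < δ ∧ ∀ᶠ k in l, ∀ i, u k i ∈ Set.Icc m M) :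
    ∃ c : ℝ, Tendsto u l (𝓝 fun _ => c) := by
  -- Convergence uniform in `i` is convergence of `u k i` along `l ×ˢ ⊤`.
  have hcauchy : Cauchy (map (fun q : α × ι => u q.1 q.2) (l ×ˢ ⊤)) := by
    refine Metric.cauchy_iff.2 ⟨inferInstance, fun δ hδ => ?_⟩
    obtain ⟨m, M, hmM, hu⟩ := h δ hδ
    refine ⟨Set.Icc m M, ?_, fun a ha b hb => (Real.dist_le_of_mem_Icc ha hb).trans_lt hmM⟩
    exact mem_map.2 ((hu.prod_inl ⊤).mono fun q hq => hq q.2)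
  obtain ⟨c, hc⟩ := cauchy_iff_exists_le_nhds.1 hcauchy
  refine ⟨c, tendsto_pi_nhds.2 fun i => ?_⟩
  exact Tendsto.comp (g := fun q : α × ι => u q.1 q.2) hc (tendsto_id.prodMk tendsto_top)

section SpanningRoot

variable {ι R : Type*}

/-- `r` is the root of a directed spanning tree of the digraph `G(A)`, in which `A v u ≠ 0` is an
edge from `u` to `v`. -/
def IsSpanningRoot [Zero R] (A : Matrix ι ι R) (r : ι) : Prop :=
  ∀ j, Relation.ReflTransGen (fun u v => A v u ≠ 0) r j

lemma IsSpanningRoot.mono [Zero R] {A B : Matrix ι ι R} {r : ι} (hr : IsSpanningRoot A r)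
    (h : ∀ i j, A i j ≠ 0 → B i j ≠ 0) : IsSpanningRoot B r :=
  fun j => Relation.ReflTransGen.mono (fun u v => h v u) _ _ (hr j)

variable [Fintype ι] [DecidableEq ι] [Semiring R] [PartialOrder R] [IsStrictOrderedRing R]
  {B : Matrix ι ι R}

lemma pow_succ_apply_pos (hB : ∀ i j, 0 ≤ B i j) {i j r : ι} {k : ℕ} (hij : 0 < B i j)
    (hjr : 0 < (B ^ k) j r) : 0 < (B ^ (k + 1)) i r := by
  rw [pow_succ', mul_apply]
  exact Finset.sum_pos' (fun l _ => mul_nonneg (hB i l) (pow_apply_nonneg hB k l r))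
    ⟨j, Finset.mem_univ j, mul_pos hij hjr⟩

lemma IsSpanningRoot.exists_pow_apply_pos (hB : ∀ i j, 0 ≤ B i j) {r : ι}
    (hr : IsSpanningRoot B r) (i : ι) : ∃ k : ℕ, 0 < (B ^ k) i r := by
  induction hr i with
  | refl => exact ⟨0, by simp⟩
  | tail _ huv ih =>
    obtain ⟨k, hk⟩ := ih
    exact ⟨k + 1, pow_succ_apply_pos hB ((hB _ _).lt_of_ne' huv) hk⟩

lemma IsSpanningRoot.exists_pow_col_pos (hB : ∀ i j, 0 ≤ B i j) (hdiag : ∀ i, 0 < B i i) {r : ι}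
    (hr : IsSpanningRoot B r) : ∃ N : ℕ, ∀ i, 0 < (B ^ N) i r := by
  refine (eventually_all.2 fun i => ?_ : ∀ᶠ N in atTop, ∀ i, 0 < (B ^ N) i r).exists
  obtain ⟨K, hK⟩ := hr.exists_pow_apply_pos hB i
  filter_upwards [eventually_ge_atTop K] with k hk
  exact Nat.le_induction hK (fun _ _ ih => pow_succ_apply_pos hB (hdiag i) ih) k hk

end SpanningRoot

section RowStochastic

variable {ι : Type*} [Fintype ι] [DecidableEq ι]

lemma mulVec_mem_of_convex {R : Type*} [Field R] [LinearOrder R] [IsStrictOrderedRing R]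
    {B : Matrix ι ι R} (hB : B ∈ rowStochastic R ι) {s : Set R} (hs : Convex R s) {x : ι → R}
    (hx : ∀ i, x i ∈ s) (i : ι) : (B *ᵥ x) i ∈ s :=
  hs.sum_mem (fun _ _ => nonneg_of_mem_rowStochastic hB) (sum_row_of_mem_rowStochastic hB i)
    fun j _ => hx j

section Contraction

variable {R : Type*} [CommRing R] [PartialOrder R] [IsOrderedRing R] {B : Matrix ι ι R}
  {r : ι} {ε : R} {x : ι → R}

lemma mulVec_mem_Icc_of_le_col (hB : B ∈ rowStochastic R ι) (hε : ∀ i, ε ≤ B i r) {m M : R}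
    (hx : ∀ i, x i ∈ Set.Icc m M) (i : ι) :
    (B *ᵥ x) i ∈ Set.Icc (ε * x r + (1 - ε) * m) (ε * x r + (1 - ε) * M) := by
  have hcol : ∀ y : ι → R, 0 ≤ y → ε * y r ≤ (B *ᵥ y) i := fun y hy =>
    (mul_le_mul_of_nonneg_right (hε i) (hy r)).trans
      (Finset.single_le_sum (f := fun j => B i j * y j)
        (fun j _ => mul_nonneg (nonneg_of_mem_rowStochastic hB) (hy j)) (Finset.mem_univ r))
  have hconst : ∀ c : R, (B *ᵥ fun _ => c) i = c := fun c => by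
    simp only [mulVec, dotProduct, ← Finset.sum_mul, sum_row_of_mem_rowStochastic hB, one_mul]
  have hlow := hcol (x - fun _ => m) fun j => sub_nonneg.2 (hx j).1
  have hupp := hcol ((fun _ => M) - x) fun j => sub_nonneg.2 (hx j).2
  rw [mulVec_sub, Pi.sub_apply, Pi.sub_apply, hconst] at hlow hupp
  constructor
  · linear_combination hlow
  · linear_combination hupp

lemma exists_Icc_pow_mulVec_of_le_col (hB : B ∈ rowStochastic R ι) (hε : ∀ i, ε ≤ B i r) {a b : R}
    (hx : ∀ i, x i ∈ Set.Icc a b) (q : ℕ) :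
    ∃ m M : R, M - m = (1 - ε) ^ q * (b - a) ∧ ∀ i, (B ^ q *ᵥ x) i ∈ Set.Icc m M := by
  induction q with
  | zero => exact ⟨a, b, by simp, by simpa using hx⟩
  | succ q ih =>
    obtain ⟨m, M, hmM, hq⟩ := ih
    have hcontr := mulVec_mem_Icc_of_le_col hB hε hq
    rw [mulVec_mulVec, ← pow_succ'] at hcontr
    exact ⟨_, _, by linear_combination (1 - ε) * hmM, hcontr⟩

end Contraction

variable {B : Matrix ι ι ℝ}

lemma exists_tendsto_pow_mulVec_of_col_pos (hB : B ∈ rowStochastic ℝ ι) {r : ι} {N : ℕ}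
    (hN : ∀ i, 0 < (B ^ N) i r) (x : ι → ℝ) :
    ∃ c : ℝ, Tendsto (fun k => B ^ k *ᵥ x) atTop (𝓝 fun _ => c) := by
  have : Nonempty ι := ⟨r⟩
  have hpow : ∀ k, B ^ k ∈ rowStochastic ℝ ι := pow_mem hB
  obtain ⟨s, hs⟩ := Finite.exists_min fun i => (B ^ N) i r
  obtain ⟨a, ha⟩ := Finite.exists_min x
  obtain ⟨b, hb⟩ := Finite.exists_max x
  have hshrink : Tendsto (fun q : ℕ => (1 - (B ^ N) s r) ^ q * (x b - x a)) atTop (𝓝 0) := by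
    simpa using (tendsto_pow_atTop_nhds_zero_of_lt_one
      (sub_nonneg.2 (le_one_of_mem_rowStochastic (hpow N)))
      (sub_lt_self 1 (hN s))).mul_const (x b - x a)
  refine exists_tendsto_const_of_eventually_mem_Icc fun δ hδ => ?_
  obtain ⟨q, hq⟩ := (hshrink.eventually_lt_const hδ).exists
  obtain ⟨m, M, hmM, hbox⟩ :=
    exists_Icc_pow_mulVec_of_le_col (hpow N) hs (fun i => ⟨ha i, hb i⟩) q
  refine ⟨m, M, hmM ▸ hq, ?_⟩
  filter_upwards [eventually_ge_atTop (N * q)] with k hk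
  obtain ⟨l, rfl⟩ := Nat.exists_eq_add_of_le' hk
  rw [pow_add, ← mulVec_mulVec, pow_mul]
  exact mulVec_mem_of_convex (hpow l) (convex_Icc m M) hbox

lemma exists_tendsto_pow_of_col_pos (hB : B ∈ rowStochastic ℝ ι) {r : ι} {N : ℕ}
    (hN : ∀ i, 0 < (B ^ N) i r) :
    ∃ p ∈ stdSimplex ℝ ι, Tendsto (fun k => B ^ k) atTop (𝓝 (vecMulVec 1 p)) := by
  choose p hp using fun j => exists_tendsto_pow_mulVec_of_col_pos hB hN (Pi.single j 1)
  have hentry : ∀ i j, Tendsto (fun k => (B ^ k) i j) atTop (𝓝 (p j)) := fun i j => by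
    simpa only [mulVec_single_one, col_apply] using tendsto_pi_nhds.1 (hp j) i
  refine ⟨p, ?_, ?_⟩
  · refine (isClosed_stdSimplex ℝ ι).mem_of_tendsto (tendsto_pi_nhds.2 (hentry r)) ?_
    exact Eventually.of_forall fun k => ⟨fun _ => nonneg_of_mem_rowStochastic (pow_mem hB k),
      sum_row_of_mem_rowStochastic (pow_mem hB k) r⟩
  · refine tendsto_pi_nhds.2 fun i => tendsto_pi_nhds.2 fun j => ?_
    simpa [vecMulVec_apply] using hentry i j

end RowStochastic

section Signature

variable {ι R : Type*}

/-- A vector of signs, such as the `σ` of a gauge transformation `A ↦ D_σ A D_σ`. -/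
def IsSignature [One R] [Neg R] (σ : ι → R) : Prop :=
  ∀ i, σ i = 1 ∨ σ i = -1

namespace IsSignature

lemma mul_self [Ring R] {σ : ι → R} (hσ : IsSignature σ) (i : ι) : σ i * σ i = 1 := by
  rcases hσ i with h | h <;> simp [h]

lemma ne_zero [Ring R] [Nontrivial R] {σ : ι → R} (hσ : IsSignature σ) (i : ι) : σ i ≠ 0 :=
  left_ne_zero_of_mul_eq_one (hσ.mul_self i)

lemma abs_eq_one [Ring R] [LinearOrder R] [IsOrderedRing R] {σ : ι → R} (hσ : IsSignature σ)
    (i : ι) : |σ i| = 1 :=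
  (abs_eq zero_le_one).2 (hσ i)

lemma diagonal_mul_self [Fintype ι] [DecidableEq ι] [Ring R] {σ : ι → R} (hσ : IsSignature σ) :
    diagonal σ * diagonal σ = 1 := by
  rw [diagonal_mul_diagonal, ← diagonal_one]
  exact congrArg diagonal (funext hσ.mul_self)

end IsSignature

end Signature

section SignedLaplacian

variable {ι R : Type*} [Fintype ι] [DecidableEq ι] [CommRing R] [LinearOrder R]

/-- The Laplacian `D - A` with absolute degrees `d i = ∑ j, |A i j|`; it extends `lapR` to arbitrary
finite index types and ordered rings. -/
def signedLaplacian (A : Matrix ι ι R) : Matrix ι ι R :=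
  diagonal (fun i => ∑ j, |A i j|) - A

variable {A : Matrix ι ι R} {σ : ι → R} {κ : R}

lemma one_sub_smul_signedLaplacian_apply_ne {i j : ι} (hij : i ≠ j) :
    (1 - κ • signedLaplacian A) i j = κ * A i j := by
  simp [signedLaplacian, hij]

lemma IsSpanningRoot.one_sub_smul_signedLaplacian [NoZeroDivisors R] {r : ι}
    (hr : IsSpanningRoot A r) (hκ : κ ≠ 0) (hdeg : ∀ i, κ * signedLaplacian A i i ≠ 1) :
    IsSpanningRoot (1 - κ • signedLaplacian A) r := by
  refine hr.mono fun i j hij => ?_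
  obtain rfl | hne := eq_or_ne i j
  · simpa [sub_eq_zero] using (hdeg i).symm
  · simpa only [one_sub_smul_signedLaplacian_apply_ne hne] using mul_ne_zero hκ hij

variable [IsOrderedRing R]

lemma IsSignature.signedLaplacian_conj (hσ : IsSignature σ) (A : Matrix ι ι R) :
    signedLaplacian (diagonal σ * A * diagonal σ) =
      diagonal σ * signedLaplacian A * diagonal σ := by
  have hdeg : diagonal σ * diagonal (fun i => ∑ j, |A i j|) * diagonal σ =
      diagonal fun i => ∑ j, |A i j| := by
    simp only [diagonal_mul_diagonal, mul_right_comm, hσ.mul_self, one_mul]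
  simp only [signedLaplacian, mul_sub, sub_mul, hdeg, mul_diagonal, diagonal_mul, abs_mul,
    hσ.abs_eq_one, one_mul, mul_one]

lemma IsSignature.one_sub_smul_signedLaplacian_conj (hσ : IsSignature σ) (A : Matrix ι ι R)
    (κ : R) :
    1 - κ • signedLaplacian (diagonal σ * A * diagonal σ) =
      diagonal σ * (1 - κ • signedLaplacian A) * diagonal σ := by
  rw [hσ.signedLaplacian_conj, mul_sub, sub_mul, mul_one, hσ.diagonal_mul_self,
    Matrix.mul_smul, Matrix.smul_mul]

lemma signedLaplacian_mulVec_one (hA : ∀ i j, 0 ≤ A i j) : signedLaplacian A *ᵥ 1 = 0 := by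
  rw [signedLaplacian, sub_mulVec, sub_eq_zero]
  ext i
  rw [mulVec_diagonal]
  simp only [mulVec, dotProduct, Pi.one_apply, mul_one, abs_of_nonneg (hA _ _)]

lemma one_sub_smul_signedLaplacian_mem_rowStochastic (hA : ∀ i j, 0 ≤ A i j) (hκ : 0 ≤ κ)
    (hdeg : ∀ i, κ * signedLaplacian A i i ≤ 1) :
    1 - κ • signedLaplacian A ∈ rowStochastic R ι := by
  refine mem_rowStochastic.2 ⟨fun i j => ?_, ?_⟩
  · obtain rfl | hij := eq_or_ne i j
    · simpa using hdeg i
    · simpa only [one_sub_smul_signedLaplacian_apply_ne hij] using mul_nonneg hκ (hA i j)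
  · rw [sub_mulVec, one_mulVec, smul_mulVec, signedLaplacian_mulVec_one hA, smul_zero, sub_zero]

end SignedLaplacian

section Consensus

variable {ι : Type*} [Fintype ι] [DecidableEq ι] {A : Matrix ι ι ℝ} {σ : ι → ℝ} {κ : ℝ}

lemma exists_tendsto_pow_one_sub_smul_signedLaplacian_of_nonneg (hA : ∀ i j, 0 ≤ A i j)
    (hκ : 0 < κ) (hdeg : ∀ i, κ * signedLaplacian A i i < 1) {r : ι} (hr : IsSpanningRoot A r) :
    ∃ p ∈ stdSimplex ℝ ι,
      Tendsto (fun k => (1 - κ • signedLaplacian A) ^ k) atTop (𝓝 (vecMulVec 1 p)) := by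
  have hB := one_sub_smul_signedLaplacian_mem_rowStochastic hA hκ.le fun i => (hdeg i).le
  have hroot := hr.one_sub_smul_signedLaplacian hκ.ne' fun i => (hdeg i).ne
  obtain ⟨N, hN⟩ := hroot.exists_pow_col_pos hB.1 fun i => by simpa using hdeg i
  exact exists_tendsto_pow_of_col_pos hB hN

lemma exists_tendsto_pow_one_sub_smul_signedLaplacian (hσ : IsSignature σ)
    (hA : ∀ i j, 0 ≤ (diagonal σ * A * diagonal σ) i j)
    (hκ : 0 < κ) (hdeg : ∀ i, κ * signedLaplacian A i i < 1) {r : ι} (hr : IsSpanningRoot A r) :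
    ∃ p ∈ stdSimplex ℝ ι,
      Tendsto (fun k => (1 - κ • signedLaplacian A) ^ k) atTop (𝓝 (vecMulVec σ (p * σ))) := by
  have hW : IsSpanningRoot (diagonal σ * A * diagonal σ) r :=
    hr.mono fun i j hij => by simp [hσ.ne_zero, hij]
  have hdegW : ∀ i, κ * signedLaplacian (diagonal σ * A * diagonal σ) i i < 1 := fun i => by
    simpa only [hσ.signedLaplacian_conj, mul_diagonal, diagonal_mul, mul_right_comm, hσ.mul_self,
      one_mul] using hdeg i
  obtain ⟨p, hp, hlim⟩ :=
    exists_tendsto_pow_one_sub_smul_signedLaplacian_of_nonneg hA hκ hdegW hW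
  refine ⟨p, hp, ?_⟩
  have hgauge : 1 - κ • signedLaplacian A = diagonal σ *
      (1 - κ • signedLaplacian (diagonal σ * A * diagonal σ)) * diagonal σ := by
    rw [← hσ.one_sub_smul_signedLaplacian_conj,
      conj_conj_of_mul_self_eq_one hσ.diagonal_mul_self]
  have hrank : diagonal σ * vecMulVec 1 p * diagonal σ = vecMulVec σ (p * σ) := by
    ext i j
    simp [mul_diagonal, diagonal_mul, vecMulVec_apply, mul_assoc]
  simp only [hgauge, conj_pow_of_mul_self_eq_one hσ.diagonal_mul_self, ← hrank]
  exact (hlim.const_mul _).mul_const _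

theorem stmt17_general (hσ : IsSignature σ)
    (hA : ∀ i j, 0 ≤ (diagonal σ * A * diagonal σ) i j) (hκ : 0 < κ)
    (hdeg : ∀ i, κ * signedLaplacian A i i < 1) (htree : ∃ r, IsSpanningRoot A r) :
    ∃ η : ι → ℝ, η ᵥ* signedLaplacian A = 0 ∧ (∑ i, |η i|) = 1 ∧
      ∀ x : ι → ℝ, Tendsto (fun k : ℕ => (1 - κ • signedLaplacian A) ^ k *ᵥ x) atTop
        (𝓝 ((η ⬝ᵥ x) • σ)) := by
  obtain ⟨r, hr⟩ := htree
  obtain ⟨p, hp, hlim⟩ := exists_tendsto_pow_one_sub_smul_signedLaplacian hσ hA hκ hdeg hr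
  refine ⟨p * σ, ?_, ?_, fun x => ?_⟩
  · have hstat := mul_eq_of_tendsto_pow hlim
    rw [mul_sub, mul_one, sub_eq_self, Matrix.mul_smul, smul_eq_zero_iff_right hκ.ne',
      vecMulVec_mul, vecMulVec_eq_zero] at hstat
    exact hstat.resolve_left fun h => hσ.ne_zero r (congrFun h r)
  · simpa [abs_mul, hσ.abs_eq_one, abs_of_nonneg (hp.1 _)] using hp.2
  · have hmulVec : Continuous fun M : Matrix ι ι ℝ => M *ᵥ x :=
      continuous_id.matrix_mulVec continuous_const
    have h := (hmulVec.tendsto _).comp hlim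
    rwa [vecMulVec_mulVec, op_smul_eq_smul] at h

end Consensus

theorem stmt17 {n : ℕ} (A : Matrix (Fin n) (Fin n) ℝ) (hdiag : ∀ i, A i i = 0)
    (κ : ℝ) (hκ1 : 0 < κ) (hκ2 : κ < (⨆ i, ∑ j, |A i j|)⁻¹)
    (hess : EssNonnegR A) (htree : hasSpanningTreeR A) :
    ∃ σ : Fin n → ℝ, (∀ i, σ i = 1 ∨ σ i = -1) ∧
      (∀ i j, 0 ≤ (Matrix.diagonal σ * A * Matrix.diagonal σ) i j) ∧
      ∃ η : Fin n → ℝ, η ᵥ* lapR A = 0 ∧ (∑ i, |η i|) = 1 ∧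
        ∀ x0 : Fin n → ℝ,
          Tendsto (fun k : ℕ => ((1 : Matrix (Fin n) (Fin n) ℝ) - κ • lapR A) ^ k *ᵥ x0)
            atTop (nhds ((η ⬝ᵥ x0) • σ)) := by
  obtain ⟨σ, hσ, hA⟩ := hess
  refine ⟨σ, hσ, hA, stmt17_general hσ hA hκ1 (fun i => ?_) htree⟩
  simpa [signedLaplacian, hdiag] using
    mul_lt_one_of_lt_inv_iSup (Set.finite_range _).bddAbove hκ1.le hκ2 i
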